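/- (Proposition 1.) Let B be a finite set and let (B'_i)_{i ∈ ι} be a nonempty finite family of pairwise distinct subsets of B forming an antichain under inclusion, with 0 < |B'_i| < |B| for all i. Give each B'_i the simple basic belief assignment with weight a_i = |B'_i|/|B|, let m be the Dempster combination over the frame B, let Bel be its credibility function, and for each i set s_i = Σ m(X), the sum over focal elements X of m with X ⊊ B'_i arising as nonempty intersections ⋂_{j ∈ S} B'_j with |S| ≥ 2 (so that Bel(B'_i) = m(B'_i) + s_i). Let W_Bel = {i ∈ ι : Bel(B'_i) is maximal} and W_card = {i ∈ ι : |B'_i| is maximal}. Then W_Bel = W_card if and only if both of the following hold: (1) for all i, j ∈ W_Bel, m(B'_i) = m(B'_j) and s_i = s_j; (2) for all i ∈ W_Bel and all j ∉ W_Bel, m(B'_i) − m(B'_j) > max(0, s_j − s_i). -/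

import Mathlib

open Finset

/-- The intersection `⋂_{i ∈ S} B'_i` taken within the frame `Θ`, with the convention
that the empty intersection (`S = ∅`) is the whole frame `Θ`. -/
def interS {α ι : Type*} [DecidableEq α] (Θ : Finset α) (B : ι → Finset α)
    (S : Finset ι) : Finset α :=
  Θ.filter (fun x => ∀ i ∈ S, x ∈ B i)

/-- The conjunctive weight `Π_{i ∈ S} a_i · Π_{i ∉ S} (1 − a_i)` of a subfamily `S` when
combining the simple BBAs with focal sets `B'_i` and weights `a_i`. -/
def weight {ι : Type*} [Fintype ι] [DecidableEq ι] (a : ι → ℝ) (S : Finset ι) : ℝ :=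
  (∏ i ∈ S, a i) * ∏ i ∈ Finset.univ \ S, (1 - a i)

/-- The total conflict `k` of the conjunctive combination of the simple BBAs with focal
sets `B'_i ⊆ Θ` and weights `a_i`: the total weight of the subfamilies with empty
intersection. -/
def totalConflict {α ι : Type*} [DecidableEq α] [Fintype ι] [DecidableEq ι]
    (Θ : Finset α) (B : ι → Finset α) (a : ι → ℝ) : ℝ :=
  ∑ S ∈ (Finset.univ : Finset ι).powerset,
    if interS Θ B S = ∅ then weight a S else 0

/-- The Dempster combination of the simple BBAs with focal sets `B'_i ⊆ Θ` and weights
`a_i`: `m(X) = (1−k)⁻¹ · Σ_{S : ⋂_{i ∈ S} B'_i = X} Π_{i ∈ S} a_i · Π_{i ∉ S} (1 − a_i)`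
for `X ≠ ∅`, and `m(∅) = 0`. -/
noncomputable def dempsterCombo {α ι : Type*} [DecidableEq α] [Fintype ι] [DecidableEq ι]
    (Θ : Finset α) (B : ι → Finset α) (a : ι → ℝ) (X : Finset α) : ℝ :=
  if X = ∅ then 0 else
    (1 - totalConflict Θ B a)⁻¹ *
      ∑ S ∈ (Finset.univ : Finset ι).powerset,
        if interS Θ B S = X then weight a S else 0

/-- The credibility (belief) function of a basic belief assignment `m`:
`Bel(A) = Σ_{X ⊆ A, X ≠ ∅} m(X)`. -/
noncomputable def credibility {α : Type*} [DecidableEq α] (m : Finset α → ℝ)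
    (A : Finset α) : ℝ :=
  ∑ X ∈ A.powerset.filter (fun X => X ≠ ∅), m X

/-- The collection of focal sets arising as nonempty intersections `⋂_{j ∈ S} B'_j` of
subfamilies with at least two members. -/
def fociInters {α ι : Type*} [DecidableEq α] [Fintype ι] [DecidableEq ι]
    (Θ : Finset α) (B : ι → Finset α) : Finset (Finset α) :=
  (((Finset.univ : Finset ι).powerset.filter (fun S => 2 ≤ S.card)).image
    (interS Θ B)).filter (fun X => X ≠ ∅)

/-!
An antichain member `B i` arises from a subfamily `S` only when `S = {i}`, so its Dempster mass is a
constant multiple of `a i / (1 - a i)`: on the members, mass is ordered exactly as the weights are.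
Everything else is about two functions `f` (mass) and `g` (proper focal mass) with `f + g` the
credibility. The maximizers of `f + g` are the maximizers of `f` iff `f` is constant on them and
smaller off them; as `f + g` has these two properties anyway, they can be rephrased in terms of the
differences of `f` and `g`.
-/

section Maximizers

variable {ι β γ : Type*}

/-- The set of global maximizers (the argmax) of `f`, the form in which the index sets `W_Bel` and
`W_card` are given. -/
def maximizers [LE β] (f : ι → β) : Set ι := {i | ∀ j, f j ≤ f i}

lemma maximizers_nonempty [LinearOrder β] [Finite ι] [Nonempty ι] (f : ι → β) :
    (maximizers f).Nonempty :=
  Finite.exists_max f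

lemma maximizers_congr [LE β] [LE γ] {f : ι → β} {g : ι → γ}
    (h : ∀ i j, f i ≤ f j ↔ g i ≤ g j) : maximizers f = maximizers g :=
  Set.ext fun i => forall_congr' fun j => h j i

lemma eq_maximizers_iff [LinearOrder β] {W : Set ι} (hW : W.Nonempty) {f : ι → β} :
    W = maximizers f ↔
      (∀ i ∈ W, ∀ j ∈ W, f i = f j) ∧ ∀ i ∈ W, ∀ j, j ∉ W → f j < f i := by
  constructor
  · rintro rfl
    refine ⟨fun i hi j hj => le_antisymm (hj i) (hi j), fun i hi j hj => ?_⟩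
    by_contra! hij
    exact hj fun k => (hi k).trans hij
  · rintro ⟨hconst, hlt⟩
    refine Set.Subset.antisymm (fun i hi j => ?_) fun i hi => ?_
    · by_cases hj : j ∈ W
      · exact (hconst j hj i hi).le
      · exact (hlt i hi j hj).le
    · by_contra hiW
      obtain ⟨k, hk⟩ := hW
      exact (hlt k hk i hiW).not_ge (hi k)

lemma maximizers_add_eq_maximizers_iff [AddCommGroup β] [LinearOrder β] [IsOrderedAddMonoid β]
    [Finite ι] [Nonempty ι] {f g : ι → β} {W : Set ι} (hW : W = maximizers (f + g)) :
    W = maximizers f ↔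
      (∀ i ∈ W, ∀ j ∈ W, f i = f j ∧ g i = g j) ∧
        ∀ i ∈ W, ∀ j, j ∉ W → max 0 (g j - g i) < f i - f j := by
  have hne : W.Nonempty := hW ▸ maximizers_nonempty (f + g)
  obtain ⟨hconst, hlt⟩ := (eq_maximizers_iff hne).mp hW
  rw [eq_maximizers_iff hne]
  refine and_congr (forall₄_congr fun i hi j hj => ?_) (forall₄_congr fun i hi j hj => ?_)
  · have hadd : f i + g i = f j + g j := hconst i hi j hj
    exact ⟨fun hf => ⟨hf, add_left_cancel (hf ▸ hadd)⟩, And.left⟩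
  · have hadd : g j - g i < f i - f j := by
      rw [sub_lt_sub_iff, add_comm]
      exact hlt i hi j hj
    rw [max_lt_iff, sub_pos, and_iff_left hadd]

lemma maximizers_natCast_div (f : ι → ℕ) {n : ℕ} (hn : 0 < n) :
    maximizers (fun i => (f i : ℝ) / n) = maximizers f :=
  maximizers_congr fun i j => by
    rw [div_le_div_iff_of_pos_right (Nat.cast_pos.mpr hn), Nat.cast_le]

end Maximizers

lemma natCast_div_mem_Ico {k n : ℕ} (h : k < n) : (k : ℝ) / n ∈ Set.Ico 0 1 :=
  ⟨by positivity, (div_lt_one (Nat.cast_pos.mpr (k.zero_le.trans_lt h))).mpr (Nat.cast_lt.mpr h)⟩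

section Intersections

variable {α ι : Type*} [DecidableEq α] {Θ : Finset α} {B : ι → Finset α} {S : Finset ι} {i : ι}

lemma interS_empty (Θ : Finset α) (B : ι → Finset α) : interS Θ B ∅ = Θ := by
  simp [interS]

lemma interS_singleton (h : B i ⊆ Θ) : interS Θ B {i} = B i := by
  ext x
  simpa [interS] using @h x

lemma interS_subset (hi : i ∈ S) : interS Θ B S ⊆ B i := fun _ hx => (mem_filter.mp hx).2 i hi

lemma interS_eq_iff_eq_singleton (hanti : Pairwise fun i j => ¬ B i ⊆ B j) (hi : B i ⊂ Θ) :
    interS Θ B S = B i ↔ S = {i} := by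
  refine ⟨fun h => eq_singleton_iff_nonempty_unique_mem.mpr ⟨?_, fun j hj => ?_⟩, ?_⟩
  · rw [nonempty_iff_ne_empty]
    rintro rfl
    exact hi.ne ((interS_empty Θ B).symm.trans h).symm
  · by_contra hji
    exact hanti (Ne.symm hji) (h ▸ interS_subset hj)
  · rintro rfl
    exact interS_singleton hi.subset

lemma two_le_card_of_interS_ssubset (hsub : ∀ j, B j ⊆ Θ)
    (hanti : Pairwise fun i j => ¬ B i ⊆ B j) (h : interS Θ B S ⊂ B i) : 2 ≤ #S := by
  obtain rfl | hS := S.eq_empty_or_nonempty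
  · rw [interS_empty] at h
    exact absurd (hsub i) h.not_subset
  obtain ⟨j, rfl⟩ | hS := hS.exists_eq_singleton_or_nontrivial
  · rw [interS_singleton (hsub j)] at h
    exact absurd h.subset (hanti (ne_of_apply_ne B h.ne))
  · exact one_lt_card_iff_nontrivial.mpr hS

end Intersections

section Weights

variable {ι : Type*} [Fintype ι] {a : ι → ℝ}

lemma prod_one_sub_pos (ha : ∀ i, a i < 1) : 0 < ∏ i, (1 - a i) :=
  prod_pos fun i _ => sub_pos.mpr (ha i)

variable [DecidableEq ι]

lemma weight_nonneg (ha : ∀ i, a i ∈ Set.Icc 0 1) (S : Finset ι) : 0 ≤ weight a S :=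
  mul_nonneg (prod_nonneg fun i _ => (ha i).1) (prod_nonneg fun i _ => sub_nonneg.mpr (ha i).2)

lemma sum_weight (a : ι → ℝ) : ∑ S ∈ (univ : Finset ι).powerset, weight a S = 1 := by
  simpa [weight] using (prod_add a (fun i => 1 - a i) univ).symm

lemma weight_empty (a : ι → ℝ) : weight a ∅ = ∏ i, (1 - a i) := by
  simp [weight]

lemma weight_singleton {i : ι} (hi : a i ≠ 1) :
    weight a {i} = (∏ j, (1 - a j)) * (a i / (1 - a i)) := by
  have h : 1 - a i ≠ 0 := sub_ne_zero.mpr hi.symm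
  rw [weight, prod_singleton, ← prod_sdiff (subset_univ {i}), prod_singleton]
  field_simp

lemma weight_singleton_le_iff (ha : ∀ i, a i < 1) {i j : ι} :
    weight a {i} ≤ weight a {j} ↔ a i ≤ a j := by
  rw [weight_singleton (ha i).ne, weight_singleton (ha j).ne,
    mul_le_mul_iff_right₀ (prod_one_sub_pos ha),
    div_le_div_iff₀ (sub_pos.mpr (ha i)) (sub_pos.mpr (ha j))]
  constructor <;> intro h <;> linarith

end Weights

section Dempster

variable {α ι : Type*} [DecidableEq α] [Fintype ι] [DecidableEq ι]
  {Θ : Finset α} {B : ι → Finset α} {a : ι → ℝ} {i j : ι}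

lemma totalConflict_lt_one (hΘ : Θ.Nonempty) (B : ι → Finset α)
    (ha : ∀ i, a i ∈ Set.Ico 0 1) : totalConflict Θ B a < 1 := by
  rw [← sum_weight a, totalConflict]
  refine sum_lt_sum (fun S _ => ?_) ⟨∅, empty_mem_powerset _, ?_⟩
  · have hS := weight_nonneg (fun i => Set.Ico_subset_Icc_self (ha i)) S
    split_ifs
    exacts [le_rfl, hS]
  · rw [interS_empty, if_neg hΘ.ne_empty, weight_empty]
    exact prod_one_sub_pos fun i => (ha i).2

lemma dempsterCombo_apply_member (hanti : Pairwise fun i j => ¬ B i ⊆ B j) (hi : B i ⊂ Θ)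
    (hne : (B i).Nonempty) (a : ι → ℝ) :
    dempsterCombo Θ B a (B i) = (1 - totalConflict Θ B a)⁻¹ * weight a {i} := by
  simp [dempsterCombo, hne.ne_empty, interS_eq_iff_eq_singleton hanti hi]

lemma dempsterCombo_member_le_iff (hanti : Pairwise fun i j => ¬ B i ⊆ B j)
    (hsub : ∀ i, B i ⊂ Θ) (hne : ∀ i, (B i).Nonempty) (ha : ∀ i, a i ∈ Set.Ico 0 1) :
    dempsterCombo Θ B a (B i) ≤ dempsterCombo Θ B a (B j) ↔ a i ≤ a j := by
  have hconflict : totalConflict Θ B a < 1 :=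
    totalConflict_lt_one ((hne i).mono (hsub i).subset) B ha
  rw [dempsterCombo_apply_member hanti (hsub i) (hne i),
    dempsterCombo_apply_member hanti (hsub j) (hne j),
    mul_le_mul_iff_right₀ (inv_pos.mpr (sub_pos.mpr hconflict)),
    weight_singleton_le_iff fun i => (ha i).2]

lemma dempsterCombo_eq_zero {X : Finset α} (a : ι → ℝ) (hX : ∀ S, interS Θ B S ≠ X) :
    dempsterCombo Θ B a X = 0 := by
  simp [dempsterCombo, hX]

lemma mem_fociInters {X : Finset α} :
    X ∈ fociInters Θ B ↔ (∃ S : Finset ι, 2 ≤ #S ∧ interS Θ B S = X) ∧ X ≠ ∅ := by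
  simp [fociInters]

lemma credibility_dempsterCombo_member (hsub : ∀ i, B i ⊆ Θ)
    (hanti : Pairwise fun i j => ¬ B i ⊆ B j) (hne : (B i).Nonempty) (a : ι → ℝ) :
    credibility (dempsterCombo Θ B a) (B i) = dempsterCombo Θ B a (B i) +
      ∑ X ∈ (fociInters Θ B).filter (fun X => X ⊂ B i), dempsterCombo Θ B a X := by
  rw [← sum_insert (by simp), credibility]
  refine (sum_subset (fun X hX => ?_) fun X hX hX' => dempsterCombo_eq_zero a ?_).symm
  · simp only [mem_insert, mem_filter, mem_fociInters] at hX
    rw [mem_filter, mem_powerset]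
    rcases hX with rfl | ⟨⟨-, hX0⟩, hXB⟩
    exacts [⟨Subset.rfl, hne.ne_empty⟩, ⟨hXB.subset, hX0⟩]
  · rintro S rfl
    simp only [mem_filter, mem_powerset] at hX
    simp only [mem_insert, mem_filter, mem_fociInters, not_or] at hX'
    have hss : interS Θ B S ⊂ B i := hX.1.ssubset_of_ne hX'.1
    exact hX'.2 ⟨⟨⟨S, two_le_card_of_interS_ssubset hsub hanti hss, rfl⟩, hX.2⟩, hss⟩

end Dempster

theorem csrg_eq_rsrg_iff_general
    {α ι : Type*} [DecidableEq α] [Fintype ι] [DecidableEq ι] [Nonempty ι]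
    {Θ : Finset α} {B : ι → Finset α} (hsub : ∀ i, B i ⊂ Θ)
    (hanti : Pairwise fun i j => ¬ B i ⊆ B j) (hne : ∀ i, (B i).Nonempty)
    {a : ι → ℝ} (ha : ∀ i, a i ∈ Set.Ico 0 1)
    {m : Finset α → ℝ} (hm : m = dempsterCombo Θ B a)
    {s : ι → ℝ} (hs : ∀ i, s i = ∑ X ∈ (fociInters Θ B).filter (fun X => X ⊂ B i), m X)
    {W : Set ι} (hW : W = maximizers fun i => credibility m (B i)) :
    W = maximizers a ↔
      (∀ i ∈ W, ∀ j ∈ W, m (B i) = m (B j) ∧ s i = s j) ∧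
        ∀ i ∈ W, ∀ j, j ∉ W → m (B i) - m (B j) > max 0 (s j - s i) := by
  have hsplit : (fun i => credibility m (B i)) = (fun i => m (B i)) + s := by
    funext i
    rw [Pi.add_apply, hs, hm,
      credibility_dempsterCombo_member (fun i => (hsub i).subset) hanti (hne i)]
  have hmass : maximizers a = maximizers fun i => m (B i) :=
    maximizers_congr fun i j => hm ▸ (dempsterCombo_member_le_iff hanti hsub hne ha).symm
  rw [hmass]
  exact maximizers_add_eq_maximizers_iff (hsplit ▸ hW)

/-- Proposition 1: let the pairwise distinct subbases `B'_i ⊆ B`, forming an antichain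
under inclusion with `0 < |B'_i| < |B|`, carry simple BBAs with weights
`a_i = |B'_i|/|B|`; let `m` be their Dempster combination, `Bel` its credibility
function, and `s_i` the total mass of the focal intersections strictly inside `B'_i`
(so `Bel(B'_i) = m(B'_i) + s_i`). Then the set `W_Bel` of indices of maximal
credibility equals the set `W_card` of indices of maximal cardinality iff
(1) for all `i, j ∈ W_Bel`, `m(B'_i) = m(B'_j)` and `s_i = s_j`, and
(2) for all `i ∈ W_Bel` and `j ∉ W_Bel`, `m(B'_i) − m(B'_j) > max(0, s_j − s_i)`. -/
theorem csrg_eq_rsrg_iff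
    {α ι : Type*} [DecidableEq α] [Fintype ι] [DecidableEq ι] [Nonempty ι]
    (B : Finset α) (B' : ι → Finset α) (hBsub : ∀ i, B' i ⊆ B)
    (hdistinct : ∀ i j, i ≠ j → B' i ≠ B' j)
    (hantichain : ∀ i j, i ≠ j → ¬ B' i ⊆ B' j)
    (hcard : ∀ i, 0 < (B' i).card ∧ (B' i).card < B.card)
    (a : ι → ℝ) (ha : ∀ i, a i = ((B' i).card : ℝ) / (B.card : ℝ))
    (m : Finset α → ℝ) (hm : m = dempsterCombo B B' a)
    (Bel : Finset α → ℝ) (hBel : ∀ A, Bel A = credibility m A)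
    (s : ι → ℝ)
    (hs : ∀ i, s i = ∑ X ∈ (fociInters B B').filter (fun X => X ⊂ B' i), m X)
    (WBel WCard : Set ι)
    (hWBel : WBel = {i : ι | ∀ j : ι, Bel (B' j) ≤ Bel (B' i)})
    (hWCard : WCard = {i : ι | ∀ j : ι, (B' j).card ≤ (B' i).card}) :
    WBel = WCard ↔
      ((∀ i ∈ WBel, ∀ j ∈ WBel, m (B' i) = m (B' j) ∧ s i = s j) ∧
       (∀ i ∈ WBel, ∀ j : ι, j ∉ WBel →
          m (B' i) - m (B' j) > max 0 (s j - s i))) := by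
  have hBpos : 0 < #B := (Nat.zero_le _).trans_lt (hcard (Classical.arbitrary ι)).2
  have hWCard_eq : WCard = maximizers a := by
    rw [hWCard, funext ha, maximizers_natCast_div _ hBpos]
    rfl
  exact hWCard_eq ▸ csrg_eq_rsrg_iff_general
    (fun i => (hBsub i).ssubset_of_ne (ne_of_apply_ne card (hcard i).2.ne))
    (fun i j => hantichain i j) (fun i => card_pos.mp (hcard i).1)
    (fun i => ha i ▸ natCast_div_mem_Ico (hcard i).2) hm hs
    (hWBel.trans (funext hBel ▸ rfl))
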